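/- arXiv:1502.00981 — 2 statements merged into one kernel-verified Lean document; each statement's English description precedes it below -/
import Mathlib

section
/- Virasoro commutation relations for the multi-trace matrix model operators (Lemma in Section 7.3 of the paper). For all integers m, n ≥ 1, the operators L_m defined in the context satisfy L_m∘L_n − L_n∘L_m = (m−n)·L_{m+n} as linear endomorphisms of the polynomial ring A; in particular (L_m)_{m≥1} form a representation of the Virasoro commutation relations. -/
/-!
Virasoro commutation relations for the multi-trace matrix model operators
`L_m` acting on the polynomial ring `A = ℂ[t_λ]`, where `λ` runs over the
nonempty finite multisets of nonnegative integers.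
-/

open MvPolynomial

namespace VirasoroMultiTrace

/-- Index set: nonempty finite multisets of nonnegative integers. -/
abbrev Idx : Type := {μ : Multiset ℕ // μ ≠ 0}

/-- The polynomial ring `A` in the variables `t_λ`, `λ` a nonempty finite
multiset of nonnegative integers. -/
abbrev A : Type := MvPolynomial Idx ℂ

/-- The singleton variable `t_p`. -/
noncomputable def t (p : ℕ) : A := X (⟨{p}, by simp⟩ : Idx)

/-- The multilinear variable `t_{p_1, …, p_k}` (symmetric in its indices,
being labelled by the multiset `{p_1, …, p_k}`), for `k ≥ 1`. -/
noncomputable def tMulti {k : ℕ} (p : Fin (k + 1) → ℕ) : A :=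
  X (⟨(List.ofFn p : Multiset ℕ), by simp⟩ : Idx)

/-- `∂/∂t_l` (derivative with respect to a singleton variable), with the
convention `∂/∂t_l = 0` for `l < 0`. -/
noncomputable def dS (l : ℤ) (f : A) : A :=
  if 0 ≤ l then pderiv (⟨{l.toNat}, by simp⟩ : Idx) f else 0

/-- `L_m^{(0)} = ℏ² ∑_{p=0}^{m} p (m-p) ∂²/(∂t_p ∂t_{m-p})
  + ∑_{p ≥ 0} (p+m) t_p ∂/∂t_{p+m}` (the finite first sum is written over
`p ∈ {0, …, max(m,0)}`, all extra terms having coefficient `p(m-p) = 0`; the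
second, locally finite, sum is a `finsum`). -/
noncomputable def L0 (ℏ : ℂ) (m : ℤ) (f : A) : A :=
  C (ℏ ^ 2) * ∑ p ∈ Finset.range (m.toNat + 1),
      C ((p : ℂ) * ((m : ℂ) - (p : ℂ))) * dS p (dS (m - p) f)
  + ∑ᶠ p : ℕ, C ((p : ℂ) + (m : ℂ)) * t p * dS ((p : ℤ) + m) f

/-- The multi-trace matrix model Virasoro operator
`L_m = L_m^{(0)} + ∑_{k ≥ 2} ∑_{(p_1,…,p_k) ∈ ℕ^k} ((p_1+m)/(k-2)!)
  t_{p_1,…,p_k} ∂^k/(∂t_{p_1+m} ∂t_{p_2} ⋯ ∂t_{p_k})`,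
the locally finite sums being `finsum`s (below `k = K + 2`, so
`(k-2)! = K!`). -/
noncomputable def L (ℏ : ℂ) (m : ℤ) (f : A) : A :=
  L0 ℏ m f
  + ∑ᶠ K : ℕ, ∑ᶠ p : Fin (K + 2) → ℕ,
      C (((p 0 : ℂ) + (m : ℂ)) / (Nat.factorial K : ℂ)) *
        X (⟨(List.ofFn p : Multiset ℕ), by simp⟩ : Idx) *
        dS ((p 0 : ℤ) + m)
          ((List.ofFn (fun j : Fin (K + 1) => p j.succ)).foldr
            (fun q g => dS (q : ℤ) g) f)

/-!
The operators `t_λ` with `|λ| ≥ 2` and `∂/∂t_q` all commute with each other. Consider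
`T = ∑_{k ≥ 2} 1/(k (k-2)!) ∑_{p ∈ ℕ^k} t_{p_1,…,p_k} ∂^k/(∂t_{p_1} ⋯ ∂t_{p_k})`. As `L_m^{(0)}`
commutes with the multiplication operators `t_λ`, `|λ| ≥ 2`, and
`[∂/∂t_q, L_m^{(0)}] = (q+m) ∂/∂t_{q+m}`, the symmetry of `t_λ` in its indices gives
`L_m = L_m^{(0)} + [T, L_m^{(0)}]`. The correction `[T, L_m^{(0)}]` is again a series in the
commuting operators above, so it commutes with `T` and `L_m = exp(T) L_m^{(0)} exp(-T)`. Conjugation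
carries the relations between the `L_m^{(0)}`, which are checked on generators, to the `L_m`.
-/

section LocallyFinite

variable {R M ι : Type*} [CommRing R] [AddCommGroup M] [Module R M] {F : ι → Module.End R M}

/-- A family of endomorphisms is locally finite when only finitely many of its members are nonzero
on any given vector; these are the families for which an infinite sum of operators makes sense. -/
def IsLocallyFinite (F : ι → Module.End R M) : Prop :=
  ∀ x, (fun i ↦ F i x).HasFiniteSupport

/-- The pointwise sum of a locally finite family of endomorphisms, as an endomorphism. -/
noncomputable def locallyFiniteSum (F : ι → Module.End R M) (hF : IsLocallyFinite F) :
    Module.End R M where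
  toFun x := ∑ᶠ i, F i x
  map_add' x y := by simpa only [map_add] using finsum_add_distrib (hF x) (hF y)
  map_smul' c x := by simpa only [map_smul, RingHom.id_apply] using (smul_finsum' c (hF x)).symm

theorem locallyFiniteSum_apply (hF : IsLocallyFinite F) (x : M) :
    locallyFiniteSum F hF x = ∑ᶠ i, F i x :=
  rfl

theorem IsLocallyFinite.mul_left (hF : IsLocallyFinite F) (B : Module.End R M) :
    IsLocallyFinite fun i ↦ B * F i :=
  fun x ↦ (hF x).subset fun i hi h ↦ hi (by simp_all)

theorem IsLocallyFinite.lie (hF : IsLocallyFinite F) (B : Module.End R M) :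
    IsLocallyFinite fun i ↦ ⁅F i, B⁆ :=
  fun x ↦ ((hF (B x)).union (hF.mul_left B x)).subset (Function.support_sub _ _)

theorem lie_locallyFiniteSum (hF : IsLocallyFinite F) (B : Module.End R M) :
    ⁅locallyFiniteSum F hF, B⁆ = locallyFiniteSum (fun i ↦ ⁅F i, B⁆) (hF.lie B) := by
  ext x
  change ∑ᶠ i, F i (B x) - B (∑ᶠ i, F i x) = ∑ᶠ i, (F i (B x) - B (F i x))
  rw [map_finsum B (hF x)]
  exact (finsum_sub_distrib (hF (B x)) (hF.mul_left B x)).symm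

theorem commute_locallyFiniteSum (hF : IsLocallyFinite F) {B : Module.End R M}
    (h : ∀ i, Commute B (F i)) : Commute B (locallyFiniteSum F hF) := by
  ext x
  change B (∑ᶠ i, F i x) = ∑ᶠ i, F i (B x)
  rw [map_finsum B (hF x)]
  exact finsum_congr fun i ↦ congr($(h i) x)

end LocallyFinite

theorem hasFiniteSupport_of_forall_lt_eq_zero {ι M : Type*} [Finite ι] [Zero M] {g : (ι → ℕ) → M}
    {N : ℕ} (hg : ∀ p i, N < p i → g p = 0) : g.HasFiniteSupport := by
  refine (Set.Finite.pi' fun _ : ι ↦ Set.finite_Iic N).subset fun p hp i ↦ ?_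
  by_contra hi
  exact hp (hg p i (not_le.mp hi))

theorem finsum_sum_apply_eq_card_smul {ι β M : Type*} [Fintype ι] [AddCommMonoid M]
    {H : β → (ι → β) → M} (hH : ∀ a p (σ : Equiv.Perm ι), H a (p ∘ σ) = H a p) (i₀ : ι)
    (hfin : (fun p : ι → β ↦ H (p i₀) p).HasFiniteSupport) :
    ∑ᶠ p : ι → β, ∑ i, H (p i) p = Fintype.card ι • ∑ᶠ p : ι → β, H (p i₀) p := by
  classical
  let e (i : ι) : (ι → β) ≃ (ι → β) := (Equiv.swap i₀ i).arrowCongr (Equiv.refl β)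
  have move (i : ι) : (fun p : ι → β ↦ H (p i) p) = (fun p ↦ H (p i₀) p) ∘ e i := by
    funext p
    have hp : e i p = p ∘ Equiv.swap i₀ i := rfl
    simp [hp, hH]
  have finsum_move (i : ι) : ∑ᶠ p : ι → β, H (p i) p = ∑ᶠ p : ι → β, H (p i₀) p := by
    rw [move i]
    exact finsum_comp_equiv (e i) (f := fun p ↦ H (p i₀) p)
  rw [finsum_sum_comm]
  · simp only [finsum_move, Finset.sum_const, Finset.card_univ]
  · intro i _
    rw [move i]
    exact hfin.comp_of_injective (e i).injective

theorem lie_add_lie_of_lie_lie_eq_zero {𝔤 : Type*} [LieRing 𝔤] [IsAddTorsionFree 𝔤] {T x y : 𝔤}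
    (hx : ⁅T, ⁅T, x⁆⁆ = 0) (hy : ⁅T, ⁅T, y⁆⁆ = 0) (hxy : ⁅T, ⁅T, ⁅x, y⁆⁆⁆ = 0) :
    ⁅x + ⁅T, x⁆, y + ⁅T, y⁆⁆ = ⁅x, y⁆ + ⁅T, ⁅x, y⁆⁆ := by
  -- The mixed term of the Leibniz rule for `(ad T) ^ 2` is twice this bracket.
  have hmixed : ⁅⁅T, x⁆, ⁅T, y⁆⁆ = 0 := by
    refine self_eq_neg.mp (eq_neg_of_add_eq_zero_left ?_)
    rw [leibniz_lie T x y, lie_add, leibniz_lie T ⁅T, x⁆ y, leibniz_lie T x ⁅T, y⁆, hx, hy] at hxy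
    simpa using hxy
  simp only [lie_add, add_lie, hmixed, leibniz_lie T x y, add_zero]
  abel

theorem mul_lie_eq_add {S : Type*} [Ring S] (x y z : S) : ⁅x * y, z⁆ = x * ⁅y, z⁆ + ⁅x, z⁆ * y := by
  simp only [Ring.lie_def]
  noncomm_ring

theorem commute_mulLeft_derivation {R S : Type*} [CommRing R] [CommRing S] [Algebra R S]
    {D : Derivation R S S} {x : S} (hx : D x = 0) :
    Commute (LinearMap.mulLeft R x) (D : Module.End R S) := by
  ext f
  simp [hx]

section SingletonDerivatives

-- Instance search does not derive the next three from the ring structure of `Module.End ℂ A`.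
noncomputable instance : LieRing (Module.End ℂ A) := LieRing.ofAssociativeRing
noncomputable instance : LieAlgebra ℂ (Module.End ℂ A) := LieAlgebra.ofAssociativeAlgebra
instance : IsAddTorsionFree (Module.End ℂ A) := .of_isTorsionFree ℂ _

/-- The label `{q}` of the variable `t_q`. -/
abbrev singleIdx (q : ℕ) : Idx :=
  ⟨{q}, by simp⟩

theorem eq_singleIdx_or_two_le_card (μ : Idx) : (∃ q, μ = singleIdx q) ∨ 2 ≤ μ.1.card := by
  rcases eq_or_lt_of_le (Nat.one_le_iff_ne_zero.mpr (mt Multiset.card_eq_zero.mp μ.2)) with h | h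
  · obtain ⟨q, hq⟩ := Multiset.card_eq_one.mp h.symm
    exact .inl ⟨q, Subtype.ext hq⟩
  · exact .inr h

theorem derivation_ext_t {D₁ D₂ : Derivation ℂ A A} (ht : ∀ q, D₁ (t q) = D₂ (t q))
    (hX : ∀ μ : Idx, 2 ≤ μ.1.card → D₁ (X μ) = D₂ (X μ)) : D₁ = D₂ :=
  derivation_ext fun μ ↦ by
    rcases eq_singleIdx_or_two_le_card μ with ⟨q, rfl⟩ | hμ
    exacts [ht q, hX μ hμ]

theorem pderiv_singleIdx_t (a q : ℕ) : pderiv (singleIdx a) (t q) = if a = q then 1 else 0 := by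
  classical
  simp [t, pderiv_X, Pi.single_apply, eq_comm]

theorem pderiv_singleIdx_X {μ : Idx} (hμ : 2 ≤ μ.1.card) (a : ℕ) :
    pderiv (singleIdx a) (X μ : A) = 0 :=
  pderiv_X_of_ne fun h ↦ by simp [h] at hμ

theorem exists_forall_gt_pderiv_singleIdx_eq_zero (f : A) :
    ∃ N, ∀ q, N < q → pderiv (singleIdx q) f = 0 := by
  refine ⟨f.vars.sup fun μ ↦ μ.1.sum, fun q hq ↦ pderiv_eq_zero_of_notMem_vars fun hmem ↦ ?_⟩
  have hle : q ≤ _ := Finset.le_sup (f := fun μ : Idx ↦ μ.1.sum) hmem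
  exact hq.not_ge hle

/-- `∂/∂t_q` as a linear endomorphism. -/
noncomputable abbrev pderivSingle (q : ℕ) : Module.End ℂ A :=
  (pderiv (singleIdx q)).toLinearMap

theorem commute_pderivSingle (a b : ℕ) : Commute (pderivSingle a) (pderivSingle b) := by
  have h : ⁅pderiv (R := ℂ) (singleIdx a), pderiv (R := ℂ) (singleIdx b)⁆ = 0 := by
    refine derivation_ext_t (fun q ↦ ?_) fun μ hμ ↦ ?_
    · simp only [Derivation.commutator_apply, pderiv_singleIdx_t]
      split_ifs <;> simp
    · simp [Derivation.commutator_apply, pderiv_singleIdx_X hμ]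
  rw [commute_iff_lie_eq, ← Derivation.commutator_coe_linear_map, h]
  rfl

instance : LeftCommutative fun (q : ℕ) (B : Module.End ℂ A) ↦ pderivSingle q * B where
  left_comm a b B := by rw [← mul_assoc, (commute_pderivSingle a b).eq, mul_assoc]

/-- The iterated derivative `∏_{q ∈ s} ∂/∂t_q` along a multiset. -/
noncomputable def pderivMulti (s : Multiset ℕ) : Module.End ℂ A :=
  s.foldr (fun q B ↦ pderivSingle q * B) 1

@[simp]
theorem pderivMulti_zero : pderivMulti 0 = 1 :=
  rfl

@[simp]
theorem pderivMulti_cons (a : ℕ) (s : Multiset ℕ) :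
    pderivMulti (a ::ₘ s) = pderivSingle a * pderivMulti s :=
  Multiset.foldr_cons ..

theorem commute_pderivMulti {B : Module.End ℂ A} (h : ∀ a, Commute B (pderivSingle a))
    (s : Multiset ℕ) : Commute B (pderivMulti s) := by
  induction s using Multiset.induction with
  | empty => exact Commute.one_right B
  | cons a s ih => rw [pderivMulti_cons]; exact (h a).mul_right ih

theorem pderivMulti_eq_zero_of_mem {a : ℕ} {s : Multiset ℕ} (ha : a ∈ s) {f : A}
    (hf : pderiv (singleIdx a) f = 0) : pderivMulti s f = 0 := by
  rw [← Multiset.cons_erase ha, pderivMulti_cons,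
    (commute_pderivMulti (commute_pderivSingle a) _).eq, Module.End.mul_apply]
  exact (congrArg _ hf).trans (map_zero _)

theorem coeff_pderivMulti_eq_zero {f : A} {s : Multiset ℕ} {μ : Idx →₀ ℕ}
    (h : f.totalDegree < s.card + μ.degree) : coeff μ (pderivMulti s f) = 0 := by
  induction s using Multiset.induction generalizing μ with
  | empty =>
    refine coeff_eq_zero_of_totalDegree_lt ?_
    simpa [Finsupp.degree_apply] using h
  | cons a s ih =>
    have hcoeff : coeff (μ + Finsupp.single (singleIdx a) 1) (pderivMulti s f) = 0 :=
      ih (by simp only [Multiset.card_cons, map_add, Finsupp.degree_single] at h ⊢; omega)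
    rw [pderivMulti_cons, Module.End.mul_apply]
    exact (coeff_pderiv _ _).trans (by rw [hcoeff, zero_mul])

theorem pderivMulti_eq_zero_of_totalDegree_lt {f : A} {s : Multiset ℕ}
    (h : f.totalDegree < s.card) : pderivMulti s f = 0 :=
  MvPolynomial.ext _ _ fun _ ↦ by
    rw [coeff_zero, coeff_pderivMulti_eq_zero (h.trans_le (Nat.le_add_right _ _))]

end SingletonDerivatives

section OneTrace

open Finset.HasAntidiagonal (antidiagonal)

theorem isLocallyFinite_shift (m : ℕ) : IsLocallyFinite fun p : ℕ ↦
    ((p + m : ℕ) : ℂ) • (LinearMap.mulLeft ℂ (t p) * pderivSingle (p + m)) := by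
  intro f
  obtain ⟨N, hN⟩ := exists_forall_gt_pderiv_singleIdx_eq_zero f
  refine (Set.finite_Iic N).subset fun p hp ↦ ?_
  by_contra hNp
  have hp_add : N < p + m := (not_le.mp hNp).trans_le (Nat.le_add_right p m)
  exact hp (by simp [hN (p + m) hp_add])

/-- The derivation `∑_p (p+m) t_p ∂/∂t_{p+m}`, the first-order part of `L_m^{(0)}`. -/
noncomputable def shiftDerivation (m : ℕ) : Derivation ℂ A A :=
  Derivation.mk' (locallyFiniteSum _ (isLocallyFinite_shift m)) fun f g ↦ by
    have hf := (isLocallyFinite_shift m).mul_left (LinearMap.mulLeft ℂ g) f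
    have hg := (isLocallyFinite_shift m).mul_left (LinearMap.mulLeft ℂ f) g
    simp only [locallyFiniteSum_apply, smul_eq_mul, ← LinearMap.mulLeft_apply (R := ℂ) f,
      ← LinearMap.mulLeft_apply (R := ℂ) g, map_finsum _ (isLocallyFinite_shift m _)]
    refine Eq.trans (finsum_congr fun p ↦ ?_) (finsum_add_distrib hg hf)
    simp only [LinearMap.smul_apply, Module.End.mul_apply, LinearMap.mulLeft_apply,
      Derivation.coeFn_coe, Derivation.leibniz, smul_eq_mul, mul_smul_comm, ← smul_add]
    congr 1
    ring

theorem shiftDerivation_apply (m : ℕ) (f : A) : shiftDerivation m f =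
    ∑ᶠ p : ℕ, ((p + m : ℕ) : ℂ) • (t p * pderiv (singleIdx (p + m)) f) :=
  rfl

theorem shiftDerivation_t (m q : ℕ) :
    shiftDerivation m (t q) = if m ≤ q then (q : ℂ) • t (q - m) else 0 := by
  rw [shiftDerivation_apply, finsum_eq_single _ (q - m)]
  · split_ifs with h
    · simp [pderiv_singleIdx_t, Nat.sub_add_cancel h]
    · simp [pderiv_singleIdx_t, show q - m + m ≠ q by omega]
  · intro p hp
    simp [pderiv_singleIdx_t, show p + m ≠ q by omega]

theorem shiftDerivation_X (m : ℕ) {μ : Idx} (hμ : 2 ≤ μ.1.card) : shiftDerivation m (X μ) = 0 := by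
  simp [shiftDerivation_apply, pderiv_singleIdx_X hμ]

theorem lie_shiftDerivation (m n : ℕ) :
    ⁅shiftDerivation m, shiftDerivation n⁆ = ((m : ℂ) - n) • shiftDerivation (m + n) := by
  refine derivation_ext_t (fun q ↦ ?_) fun μ hμ ↦ ?_
  · have shift_shift (a b : ℕ) : shiftDerivation a (shiftDerivation b (t q)) =
        if a + b ≤ q then ((q : ℂ) * (q - b)) • t (q - (a + b)) else 0 := by
      rw [shiftDerivation_t]
      split_ifs with hb hab hab
      · rw [Derivation.map_smul, shiftDerivation_t, if_pos (by omega), smul_smul, Nat.cast_sub hb,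
          show q - b - a = q - (a + b) by omega]
      · rw [Derivation.map_smul, shiftDerivation_t, if_neg (by omega), smul_zero]
      · omega
      · exact map_zero _
    rw [Derivation.commutator_apply, shift_shift, shift_shift, add_comm n m, Derivation.smul_apply,
      shiftDerivation_t]
    split_ifs
    · rw [← sub_smul, smul_smul]
      ring_nf
    · simp
  · simp [Derivation.commutator_apply, shiftDerivation_X _ hμ]

theorem lie_pderivSingle_shiftDerivation (a n : ℕ) :
    ⁅pderivSingle a, (shiftDerivation n : Module.End ℂ A)⁆
      = ((a + n : ℕ) : ℂ) • pderivSingle (a + n) := by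
  have h : ⁅pderiv (R := ℂ) (singleIdx a), shiftDerivation n⁆
      = ((a + n : ℕ) : ℂ) • pderiv (singleIdx (a + n)) := by
    refine derivation_ext_t (fun q ↦ ?_) fun μ hμ ↦ ?_
    · rw [Derivation.commutator_apply, shiftDerivation_t, pderiv_singleIdx_t, Derivation.smul_apply,
        pderiv_singleIdx_t]
      rcases eq_or_ne (a + n) q with rfl | hq
      · simp [pderiv_singleIdx_t, apply_ite (shiftDerivation n)]
      · have hq' : n ≤ q → a ≠ q - n := by omega
        simp +contextual [apply_ite (shiftDerivation n), apply_ite (pderiv _), pderiv_singleIdx_t,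
          hq, hq']
    · simp [Derivation.commutator_apply, shiftDerivation_X _ hμ, pderiv_singleIdx_X hμ]
  rw [← Derivation.commutator_coe_linear_map, h]
  rfl

/-- The second-order part `∑_{a+b=m} a b ∂²/(∂t_a ∂t_b)` of `L_m^{(0)}`, without the factor `ℏ²`. -/
noncomputable def quadraticPart (m : ℕ) : Module.End ℂ A :=
  ∑ p ∈ antidiagonal m, ((p.1 * p.2 : ℕ) : ℂ) • (pderivSingle p.1 * pderivSingle p.2)

theorem commute_quadraticPart {B : Module.End ℂ A} (h : ∀ a, Commute B (pderivSingle a)) (m : ℕ) :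
    Commute B (quadraticPart m) :=
  Commute.sum_right _ _ _ fun _ _ ↦ ((h _).mul_right (h _)).smul_right _

theorem sum_antidiagonal_tsub_smul_sub {R W : Type*} [CommRing R] [AddCommGroup W] [Module R W]
    (m n : ℕ) {g : ℕ × ℕ → W} (hg : ∀ p, g p.swap = g p) :
    (2 : R) • ∑ p ∈ antidiagonal (m + n), ((m - p.1 : ℕ) : R) • g p
      - (2 : R) • ∑ p ∈ antidiagonal (m + n), ((n - p.1 : ℕ) : R) • g p
      = ((m : R) - n) • ∑ p ∈ antidiagonal (m + n), g p := by
  have swap (c : ℕ → R) : ∑ p ∈ antidiagonal (m + n), c p.1 • g p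
      = ∑ p ∈ antidiagonal (m + n), c p.2 • g p := by
    rw [← Finset.Nat.sum_antidiagonal_swap]
    simp only [hg, Prod.fst_swap]
  have untruncate : ∑ p ∈ antidiagonal (m + n), ((m - p.1 : ℕ) : R) • g p
      - ∑ p ∈ antidiagonal (m + n), ((n - p.1 : ℕ) : R) • g p
      = ∑ p ∈ antidiagonal (m + n), ((m : R) - p.1) • g p := by
    rw [swap fun a ↦ ((n - a : ℕ) : R), ← Finset.sum_sub_distrib]
    refine Finset.sum_congr rfl fun p hp ↦ ?_
    rw [Finset.HasAntidiagonal.mem_antidiagonal] at hp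
    rw [← sub_smul]
    congr 1
    rcases le_total p.1 m with h | h
    · rw [show n - p.2 = 0 by omega, Nat.cast_sub h, Nat.cast_zero, sub_zero]
    · rw [show m - p.1 = 0 by omega, show n - p.2 = p.1 - m by omega, Nat.cast_sub h]
      simp
  rw [← smul_sub, untruncate, two_smul]
  nth_rw 2 [swap fun a ↦ (m : R) - a]
  rw [← Finset.sum_add_distrib, Finset.smul_sum]
  refine Finset.sum_congr rfl fun p hp ↦ ?_
  have hsum : (p.1 : R) + p.2 = m + n := by
    exact_mod_cast congrArg (Nat.cast (R := R)) (Finset.HasAntidiagonal.mem_antidiagonal.mp hp)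
  rw [← add_smul]
  congr 1
  linear_combination -hsum

theorem lie_quadraticPart_shiftDerivation (m n : ℕ) :
    ⁅quadraticPart m, (shiftDerivation n : Module.End ℂ A)⁆
      = (2 : ℂ) • ∑ p ∈ antidiagonal (m + n), ((m - p.1 : ℕ) : ℂ) •
        ((p.1 * p.2 : ℕ) : ℂ) • (pderivSingle p.1 * pderivSingle p.2) := by
  let G (p : ℕ × ℕ) : Module.End ℂ A :=
    ((p.1 * p.2 * (p.2 + n) : ℕ) : ℂ) • (pderivSingle p.1 * pderivSingle (p.2 + n))
  have lie_term (p : ℕ × ℕ) :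
      ⁅((p.1 * p.2 : ℕ) : ℂ) • (pderivSingle p.1 * pderivSingle p.2),
        (shiftDerivation n : Module.End ℂ A)⁆ = G p + G p.swap := by
    simp only [G, smul_lie, mul_lie_eq_add, lie_pderivSingle_shiftDerivation, mul_smul_comm,
      smul_mul_assoc, smul_add, smul_smul, Prod.fst_swap, Prod.snd_swap,
      (commute_pderivSingle (p.1 + n) p.2).eq]
    push_cast
    ring_nf
  calc ⁅quadraticPart m, (shiftDerivation n : Module.End ℂ A)⁆
      = ∑ p ∈ antidiagonal m, (G p + G p.swap) := by
        rw [quadraticPart, LieRing.of_associative_ring_bracket, Finset.sum_mul, Finset.mul_sum,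
          ← Finset.sum_sub_distrib]
        exact Finset.sum_congr rfl fun p _ ↦ lie_term p
    _ = (2 : ℂ) • ∑ p ∈ antidiagonal m, G p := by
        rw [Finset.sum_add_distrib, Finset.Nat.sum_antidiagonal_swap, two_smul]
    _ = _ := by
        congr 1
        rw [Finset.Nat.sum_antidiagonal_eq_sum_range_succ_mk,
          Finset.Nat.sum_antidiagonal_eq_sum_range_succ_mk]
        refine Eq.trans (Finset.sum_congr rfl fun a ha ↦ ?_)
          (Finset.sum_subset (Finset.range_mono (by omega)) fun a _ ha ↦ ?_)
        · have ham : a ≤ m := by simpa [Nat.lt_succ_iff] using ha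
          simp only [G, smul_smul, show m - a + n = m + n - a by omega]
          push_cast
          ring_nf
        · have hma : m - a = 0 := by
            rw [Finset.mem_range] at ha
            omega
          simp [hma]

/-- `L_m^{(0)}` as a linear endomorphism. -/
noncomputable def oneTrace (ℏ : ℂ) (m : ℕ) : Module.End ℂ A :=
  ℏ ^ 2 • quadraticPart m + (shiftDerivation m : Module.End ℂ A)

theorem lie_oneTrace (ℏ : ℂ) (m n : ℕ) :
    ⁅oneTrace ℏ m, oneTrace ℏ n⁆ = ((m : ℂ) - n) • oneTrace ℏ (m + n) := by
  have quad_quad : ⁅quadraticPart m, quadraticPart n⁆ = 0 :=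
    (commute_quadraticPart (fun a ↦ (commute_quadraticPart (commute_pderivSingle a) m).symm)
      n).lie_eq
  have quad_shift : ⁅quadraticPart m, (shiftDerivation n : Module.End ℂ A)⁆
      + ⁅(shiftDerivation m : Module.End ℂ A), quadraticPart n⁆
      = ((m : ℂ) - n) • quadraticPart (m + n) := by
    rw [← lie_skew (shiftDerivation m : Module.End ℂ A), ← sub_eq_add_neg,
      lie_quadraticPart_shiftDerivation, lie_quadraticPart_shiftDerivation, add_comm n m]
    exact sum_antidiagonal_tsub_smul_sub m n fun p ↦ by
      rw [Prod.fst_swap, Prod.snd_swap, mul_comm p.2, (commute_pderivSingle p.2 p.1).eq]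
  have shift_shift : ⁅(shiftDerivation m : Module.End ℂ A), (shiftDerivation n : Module.End ℂ A)⁆
      = ((m : ℂ) - n) • (shiftDerivation (m + n) : Module.End ℂ A) := by
    rw [← Derivation.commutator_coe_linear_map, lie_shiftDerivation]
    rfl
  simp only [oneTrace, lie_add, add_lie, smul_lie, lie_smul, quad_quad, shift_shift, smul_zero,
    zero_add, smul_add, smul_comm _ (ℏ ^ 2), ← quad_shift]
  abel

end OneTrace

section MultiTrace

theorem lie_pderivMulti_shiftDerivation (m : ℕ) (s : Multiset ℕ) :
    ⁅pderivMulti s, (shiftDerivation m : Module.End ℂ A)⁆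
      = (s.map fun a ↦ ((a + m : ℕ) : ℂ) • pderivMulti ((a + m) ::ₘ s.erase a)).sum := by
  induction s using Multiset.induction with
  | empty => simp [Ring.lie_def]
  | cons b s ih =>
    have erase_tail :
        (s.map fun a ↦ ((a + m : ℕ) : ℂ) • pderivMulti ((a + m) ::ₘ (b ::ₘ s).erase a))
          = s.map fun a ↦
            pderivSingle b * ((a + m : ℕ) : ℂ) • pderivMulti ((a + m) ::ₘ s.erase a) :=
      Multiset.map_congr rfl fun a ha ↦ by
        rw [Multiset.erase_cons_tail_of_mem ha, Multiset.cons_swap, pderivMulti_cons b,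
          mul_smul_comm]
    rw [Multiset.map_cons, Multiset.sum_cons, erase_tail, Multiset.sum_map_mul_left, ← ih,
      Multiset.erase_cons_head, pderivMulti_cons, pderivMulti_cons, mul_lie_eq_add,
      lie_pderivSingle_shiftDerivation, smul_mul_assoc, add_comm]

theorem tMulti_comp_perm {k : ℕ} (p : Fin (k + 1) → ℕ) (σ : Equiv.Perm (Fin (k + 1))) :
    tMulti (p ∘ σ) = tMulti p :=
  congrArg X (Subtype.ext (Multiset.coe_eq_coe.mpr (Equiv.Perm.ofFn_comp_perm σ p)))

variable {K : ℕ} (p : Fin (K + 2) → ℕ)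

theorem pderiv_singleIdx_tMulti (a : ℕ) : pderiv (singleIdx a) (tMulti p) = 0 :=
  pderiv_singleIdx_X (by simp) a

theorem shiftDerivation_tMulti (m : ℕ) : shiftDerivation m (tMulti p) = 0 :=
  shiftDerivation_X m (by simp)

/-- The operator `t_{p_1,…,p_k} ∂^k/(∂t_{p_1} ⋯ ∂t_{p_k})`, with `k = K + 2`. -/
noncomputable def dressingTerm : Module.End ℂ A :=
  LinearMap.mulLeft ℂ (tMulti p) * pderivMulti (List.ofFn p)

theorem lie_dressingTerm_shiftDerivation (m : ℕ) :
    ⁅dressingTerm p, (shiftDerivation m : Module.End ℂ A)⁆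
      = ∑ i, ((p i + m : ℕ) : ℂ) • (LinearMap.mulLeft ℂ (tMulti p) *
        pderivMulti ((p i + m) ::ₘ (List.ofFn p : Multiset ℕ).erase (p i))) := by
  rw [dressingTerm, mul_lie_eq_add,
    (commute_mulLeft_derivation (shiftDerivation_tMulti p m)).lie_eq, zero_mul, add_zero,
    lie_pderivMulti_shiftDerivation, Multiset.map_coe, Multiset.sum_coe, List.map_ofFn,
    List.sum_ofFn, Finset.mul_sum]
  simp only [Function.comp_apply, mul_smul_comm]

theorem isLocallyFinite_dressingTerm (K : ℕ) :
    IsLocallyFinite fun p : Fin (K + 2) → ℕ ↦ dressingTerm p := by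
  intro f
  obtain ⟨N, hN⟩ := exists_forall_gt_pderiv_singleIdx_eq_zero f
  refine hasFiniteSupport_of_forall_lt_eq_zero (N := N) fun p i hi ↦ ?_
  change dressingTerm p f = 0
  rw [dressingTerm, Module.End.mul_apply,
    pderivMulti_eq_zero_of_mem (by simp [-List.ofFn_succ]) (hN (p i) hi), map_zero]

/-- The part `∑_{p ∈ ℕ^k} t_{p_1,…,p_k} ∂^k/(∂t_{p_1} ⋯ ∂t_{p_k})` of the dressing operator,
with `k = K + 2`. -/
noncomputable def dressingPart (K : ℕ) : Module.End ℂ A :=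
  locallyFiniteSum _ (isLocallyFinite_dressingTerm K)

theorem isLocallyFinite_dressingPart :
    IsLocallyFinite fun K ↦ (((K + 2) * K.factorial : ℕ) : ℂ)⁻¹ • dressingPart K := by
  intro f
  refine (Set.finite_Iic f.totalDegree).subset fun K hK ↦ ?_
  by_contra hlt
  refine hK ?_
  have part_eq_zero : dressingPart K f = 0 := by
    rw [dressingPart, locallyFiniteSum_apply]
    refine finsum_eq_zero_of_forall_eq_zero fun p ↦ ?_
    rw [dressingTerm, Module.End.mul_apply, pderivMulti_eq_zero_of_totalDegree_lt, map_zero]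
    rw [Multiset.coe_card, List.length_ofFn]
    exact (not_le.mp hlt).trans_le (Nat.le_add_right K 2)
  simp [part_eq_zero]

/-- The dressing operator
`T = ∑_{k ≥ 2} 1/(k (k-2)!) ∑_{p ∈ ℕ^k} t_{p_1,…,p_k} ∂^k/(∂t_{p_1} ⋯ ∂t_{p_k})`:
conjugation by `exp T` turns `L_m^{(0)}` into `L_m`. -/
noncomputable def dressing : Module.End ℂ A :=
  locallyFiniteSum _ isLocallyFinite_dressingPart

theorem commute_dressing {B : Module.End ℂ A} (hpderiv : ∀ a, Commute B (pderivSingle a))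
    (htMulti : ∀ {K : ℕ} (p : Fin (K + 2) → ℕ), Commute B (LinearMap.mulLeft ℂ (tMulti p))) :
    Commute B dressing :=
  commute_locallyFiniteSum _ fun _ ↦ .smul_right (commute_locallyFiniteSum _ fun p ↦
    (htMulti p).mul_right (commute_pderivMulti hpderiv _)) _

theorem commute_dressing_pderivSingle (a : ℕ) : Commute dressing (pderivSingle a) :=
  (commute_dressing (commute_pderivSingle a) fun p ↦
    (commute_mulLeft_derivation (pderiv_singleIdx_tMulti p a)).symm).symm

theorem commute_dressing_mulLeft : Commute dressing (LinearMap.mulLeft ℂ (tMulti p)) :=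
  (commute_dressing (fun a ↦ commute_mulLeft_derivation (pderiv_singleIdx_tMulti p a)) fun q ↦ by
    ext f; simp [mul_left_comm]).symm

theorem commute_dressing_lie_shiftDerivation (m : ℕ) :
    Commute dressing ⁅dressing, (shiftDerivation m : Module.End ℂ A)⁆ := by
  nth_rw 2 [dressing]
  rw [lie_locallyFiniteSum]
  refine commute_locallyFiniteSum _ fun K ↦ ?_
  rw [smul_lie, dressingPart, lie_locallyFiniteSum]
  refine .smul_right (commute_locallyFiniteSum _ fun p ↦ ?_) _
  rw [lie_dressingTerm_shiftDerivation]
  exact .sum_right _ _ _ fun i _ ↦ .smul_right ((commute_dressing_mulLeft p).mul_right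
    (commute_pderivMulti commute_dressing_pderivSingle _)) _

theorem lie_dressingPart_shiftDerivation_apply (K m : ℕ) (f : A) :
    ⁅dressingPart K, (shiftDerivation m : Module.End ℂ A)⁆ f
      = (K + 2) • ∑ᶠ p : Fin (K + 2) → ℕ, ((p 0 + m : ℕ) : ℂ) • (tMulti p *
        pderivMulti ((p 0 + m) ::ₘ List.ofFn fun j : Fin (K + 1) ↦ p j.succ) f) := by
  let H (a : ℕ) (p : Fin (K + 2) → ℕ) : A := ((a + m : ℕ) : ℂ) •
    (tMulti p * pderivMulti ((a + m) ::ₘ (List.ofFn p : Multiset ℕ).erase a) f)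
  have H_perm (a : ℕ) (p : Fin (K + 2) → ℕ) (σ : Equiv.Perm (Fin (K + 2))) :
      H a (p ∘ σ) = H a p := by
    simp only [H, tMulti_comp_perm, Multiset.coe_eq_coe.mpr (Equiv.Perm.ofFn_comp_perm σ p)]
  have H_head (p : Fin (K + 2) → ℕ) : H (p 0) p = ((p 0 + m : ℕ) : ℂ) • (tMulti p *
      pderivMulti ((p 0 + m) ::ₘ List.ofFn fun j : Fin (K + 1) ↦ p j.succ) f) := by
    simp only [H, List.ofFn_succ (f := p), ← Multiset.cons_coe, Multiset.erase_cons_head]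
  have H_finite : (fun p : Fin (K + 2) → ℕ ↦ H (p 0) p).HasFiniteSupport := by
    obtain ⟨N, hN⟩ := exists_forall_gt_pderiv_singleIdx_eq_zero f
    refine hasFiniteSupport_of_forall_lt_eq_zero (N := N) fun p i hi ↦ ?_
    rw [H_head]
    cases i using Fin.cases with
    | zero => rw [pderivMulti_eq_zero_of_mem (Multiset.mem_cons_self _ _) (hN _ (by omega)),
        mul_zero, smul_zero]
    | succ j =>
      have hmem : p j.succ ∈ (p 0 + m) ::ₘ (List.ofFn fun j : Fin (K + 1) ↦ p j.succ) :=
        Multiset.mem_cons_of_mem (by simp [-List.ofFn_succ])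
      rw [pderivMulti_eq_zero_of_mem hmem (hN _ hi), mul_zero, smul_zero]
  rw [dressingPart, lie_locallyFiniteSum, locallyFiniteSum_apply]
  simp only [lie_dressingTerm_shiftDerivation, LinearMap.sum_apply]
  refine (finsum_sum_apply_eq_card_smul H_perm 0 H_finite).trans ?_
  rw [Fintype.card_fin, finsum_congr H_head]

theorem lie_dressing_shiftDerivation_apply (m : ℕ) (f : A) :
    ⁅dressing, (shiftDerivation m : Module.End ℂ A)⁆ f
      = ∑ᶠ K : ℕ, ∑ᶠ p : Fin (K + 2) → ℕ, (((p 0 + m : ℕ) : ℂ) / K.factorial) • (tMulti p *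
        pderivMulti ((p 0 + m) ::ₘ List.ofFn fun j : Fin (K + 1) ↦ p j.succ) f) := by
  rw [dressing, lie_locallyFiniteSum, locallyFiniteSum_apply]
  refine finsum_congr fun K ↦ ?_
  rw [smul_lie, LinearMap.smul_apply, lie_dressingPart_shiftDerivation_apply,
    ← Nat.cast_smul_eq_nsmul ℂ, smul_smul, smul_finsum]
  refine finsum_congr fun p ↦ ?_
  rw [smul_smul]
  congr 1
  have : (K.factorial : ℂ) ≠ 0 := mod_cast K.factorial_ne_zero
  have : (K : ℂ) + 2 ≠ 0 := mod_cast (K + 1).succ_ne_zero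
  push_cast
  field_simp

theorem lie_dressing_oneTrace (ℏ : ℂ) (m : ℕ) :
    ⁅dressing, oneTrace ℏ m⁆ = ⁅dressing, (shiftDerivation m : Module.End ℂ A)⁆ := by
  rw [oneTrace, lie_add, lie_smul,
    (commute_quadraticPart commute_dressing_pderivSingle m).lie_eq, smul_zero, zero_add]

theorem lie_dressing_lie_dressing_oneTrace (ℏ : ℂ) (m : ℕ) :
    ⁅dressing, ⁅dressing, oneTrace ℏ m⁆⁆ = 0 := by
  rw [lie_dressing_oneTrace, (commute_dressing_lie_shiftDerivation m).lie_eq]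

/-- `L_m` as a linear endomorphism, in the form `exp T ∘ L_m^{(0)} ∘ exp (-T)`: the exponential
series of `ad T` stops after the linear term. -/
noncomputable def multiTrace (ℏ : ℂ) (m : ℕ) : Module.End ℂ A :=
  oneTrace ℏ m + ⁅dressing, oneTrace ℏ m⁆

theorem lie_multiTrace (ℏ : ℂ) (m n : ℕ) :
    ⁅multiTrace ℏ m, multiTrace ℏ n⁆ = ((m : ℂ) - n) • multiTrace ℏ (m + n) := by
  have hmn : ⁅dressing, ⁅dressing, ⁅oneTrace ℏ m, oneTrace ℏ n⁆⁆⁆ = 0 := by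
    rw [lie_oneTrace, lie_smul, lie_smul, lie_dressing_lie_dressing_oneTrace, smul_zero]
  simp only [multiTrace, lie_oneTrace, lie_smul, smul_add,
    lie_add_lie_of_lie_lie_eq_zero (lie_dressing_lie_dressing_oneTrace ℏ m)
      (lie_dressing_lie_dressing_oneTrace ℏ n) hmn]

end MultiTrace

section Comparison

theorem dS_natCast (q : ℕ) (f : A) : dS q f = pderivSingle q f := by
  rw [dS, if_pos (Int.natCast_nonneg q)]
  rfl

theorem foldr_dS (l : List ℕ) (f : A) :
    (l.map (Nat.cast : ℕ → ℤ)).foldr (fun q g ↦ dS q g) f = pderivMulti l f := by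
  induction l with
  | nil => rfl
  | cons a l ih =>
    rw [List.map_cons, List.foldr_cons, ih, dS_natCast, ← Multiset.cons_coe, pderivMulti_cons]
    rfl

theorem L0_natCast (ℏ : ℂ) (m : ℕ) (f : A) : L0 ℏ m f = oneTrace ℏ m f := by
  rw [L0, oneTrace, LinearMap.add_apply]
  congr 1
  · rw [quadraticPart, Finset.Nat.sum_antidiagonal_eq_sum_range_succ_mk, LinearMap.smul_apply,
      LinearMap.sum_apply, ← C_mul', Int.toNat_natCast]
    refine congrArg _ (Finset.sum_congr rfl fun p hp ↦ ?_)
    have hpm : p ≤ m := by simpa [Nat.lt_succ_iff] using hp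
    rw [← Nat.cast_sub hpm, dS_natCast, dS_natCast, C_mul', LinearMap.smul_apply,
      Module.End.mul_apply, Nat.cast_mul, Nat.cast_sub hpm, Int.cast_natCast]
  · rw [Derivation.coeFn_coe, shiftDerivation_apply]
    refine finsum_congr fun p ↦ ?_
    rw [← Nat.cast_add, dS_natCast, mul_assoc, C_mul', Int.cast_natCast, Nat.cast_add]
    rfl

theorem L_natCast (ℏ : ℂ) (m : ℕ) (f : A) : L ℏ m f = multiTrace ℏ m f := by
  rw [L, multiTrace, LinearMap.add_apply, L0_natCast, lie_dressing_oneTrace,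
    lie_dressing_shiftDerivation_apply]
  refine congrArg _ (finsum_congr fun K ↦ finsum_congr fun p ↦ ?_)
  -- In `L` the indices are coerced to a `List ℤ` through the list monad, hence the `flatMap`.
  rw [← Nat.cast_add, dS_natCast, pderivMulti_cons, Module.End.mul_apply, ← foldr_dS, mul_assoc,
    C_mul', Nat.cast_add, Int.cast_natCast, List.map_eq_flatMap]
  rfl

end Comparison

theorem virasoro_commutation_multitrace_general (ℏ : ℂ) {m n : ℤ} (hm : 0 ≤ m) (hn : 0 ≤ n)
    (f : A) : L ℏ m (L ℏ n f) - L ℏ n (L ℏ m f) = C ((m : ℂ) - (n : ℂ)) * L ℏ (m + n) f := by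
  lift m to ℕ using hm
  lift n to ℕ using hn
  rw [← Nat.cast_add]
  simp only [L_natCast, C_mul', Int.cast_natCast]
  exact congr($(lie_multiTrace ℏ m n) f)

/-- **Virasoro commutation relations for the multi-trace matrix model
operators** (Lemma in Section 7.3 of Borot–Shadrin, "Blobbed topological
recursion").  For all integers `m, n ≥ 1`,
`L_m ∘ L_n - L_n ∘ L_m = (m - n) L_{m+n}` as linear endomorphisms of `A`; in
particular `(L_m)_{m ≥ 1}` form a representation of the Virasoro commutation
relations. -/
theorem virasoro_commutation_multitrace (ℏ : ℂ) :
    ∀ m n : ℤ, 1 ≤ m → 1 ≤ n →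
      ∀ f : A, L ℏ m (L ℏ n f) - L ℏ n (L ℏ m f) =
        C ((m : ℂ) - (n : ℂ)) * L ℏ (m + n) f := by
  exact fun _ _ hm hn ↦
    virasoro_commutation_multitrace_general ℏ (zero_le_one.trans hm) (zero_le_one.trans hn)

end VirasoroMultiTrace
end

section
/- Finiteness of reduced graph data (combinatorial core of Lemma 3.12 of the paper, stating that the set of reduced bipartite graphs G^□_{g,n} is finite). For all integers g ≥ 0 and n ≥ 1, the following set of pairs (V, E) is finite, where E ∈ ℕ and V : ℕ×ℕ → ℕ is a finitely supported function (V(h,k) records the number of vertices of genus h and valency k, E the number of internal edges): (i) V(h,k) = 0 whenever k = 0, and whenever 2h−2+k ≤ 0 with (h,k) ≠ (0,2); (ii) V(0,2) ≤ n; (iii) the handshake relation Σ_{h,k} k·V(h,k) = 2E + n holds; (iv) 1 + E − Σ_{h,k} V(h,k) ≥ 0; (v) the genus constraint Σ_{h,k} h·V(h,k) + (1 + E − Σ_{h,k} V(h,k)) = g holds. -/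
/-!
Finiteness of reduced graph data (combinatorial core of Lemma 3.12 of
Borot–Shadrin, "Blobbed topological recursion"): the set of reduced bipartite
graphs `G^□_{g,n}` is finite.  A graph is recorded by the pair `(V, E)` where
`V (h, k)` is the number of vertices of genus `h` and valency `k` and `E` is
the number of internal edges.
-/

/-!
The handshake and genus relations combine to `∑ (2h - 2 + k) · V (h, k) = 2g - 2 + n`, the
additivity of the Euler characteristic under gluing. Every allowed vertex other than `(0, 2)` has
weight `2h - 2 + k ≥ (h + k + 1) / 4`, while the weightless vertices `(0, 2)` are bounded in number.
So `∑ (h + k + 1) · V (h, k)` is bounded, which leaves finitely many `V`, and the handshake relation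
recovers `E` from `V`.
-/

open Finsupp (weight weight_apply)

theorem finite_setOf_weight_le {σ : Type*} {w : σ → ℕ} (hw : ∀ x, w x ≠ 0) {N : ℕ}
    (hN : {x | w x ≤ N}.Finite) : {f : σ →₀ ℕ | weight w f ≤ N}.Finite := by
  classical
  let bound : σ →₀ ℕ := Finsupp.indicator hN.toFinset fun _ _ => N
  refine (Set.finite_Iic bound).subset fun f (hf : weight w f ≤ N) x => ?_
  by_cases hx : f x = 0
  · simp [hx]
  · have hmem : x ∈ hN.toFinset := by
      simpa using (Finsupp.le_weight_of_ne_zero' w hx).trans hf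
    calc f x ≤ weight w f := Finsupp.le_weight w (hw x) f
      _ ≤ N := hf
      _ = bound x := (Finsupp.indicator_of_mem hmem fun _ _ => N).symm

/-- The negated Euler characteristic `2h - 2 + k` of a vertex `(h, k)`, viewed as a surface of genus
`h` with `k` boundary components. It is valued in `ℤ` because it is negative on `(0, 0)` and
`(0, 1)`. -/
def negEulerChar (p : ℕ × ℕ) : ℤ :=
  2 * p.1 - 2 + p.2

/-- A positive measure of the complexity of a vertex `(h, k)`; the summand `1` makes a bound on the
total size of a graph also bound its number of vertices. -/
def vertexSize (p : ℕ × ℕ) : ℕ :=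
  p.1 + p.2 + 1

theorem finite_setOf_vertexSize_le (N : ℕ) : {p | vertexSize p ≤ N}.Finite := by
  refine (Set.finite_Iic (N, N)).subset fun p (hp : p.1 + p.2 + 1 ≤ N) => ?_
  exact ⟨show p.1 ≤ N by omega, show p.2 ≤ N by omega⟩

theorem weight_negEulerChar (V : ℕ × ℕ →₀ ℕ) :
    weight negEulerChar V =
      2 * (V.sum fun p v => (p.1 : ℤ) * v) - 2 * (V.sum fun _ v => (v : ℤ)) +
        (V.sum fun p v => p.2 * v : ℕ) := by
  simp only [weight_apply, negEulerChar, Finsupp.sum, nsmul_eq_mul, Nat.cast_sum, Nat.cast_mul,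
    Finset.mul_sum, ← Finset.sum_sub_distrib, ← Finset.sum_add_distrib]
  exact Finset.sum_congr rfl fun _ _ => by ring

theorem vertexSize_le_of_three_le {p : ℕ × ℕ} (hp : 3 ≤ 2 * p.1 + p.2) :
    (vertexSize p : ℤ) ≤ 4 * negEulerChar p := by
  simp only [vertexSize, negEulerChar]
  omega

theorem weight_vertexSize_le {V : ℕ × ℕ →₀ ℕ}
    (hV : ∀ h k, 2 * h + k ≤ 2 → (h, k) ≠ (0, 2) → V (h, k) = 0) :
    (weight vertexSize V : ℤ) ≤ 4 * weight negEulerChar V + 3 * V (0, 2) := by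
  have hvertex (p) (hp : p ∈ V.support) :
      (V p * vertexSize p : ℤ) ≤
        4 * (V p * negEulerChar p) + if p = (0, 2) then 3 * (V p : ℤ) else 0 := by
    split_ifs with hbivalent
    · subst hbivalent
      simp [vertexSize, negEulerChar, mul_comm]
    · have hstable : 3 ≤ 2 * p.1 + p.2 := by
        by_contra! hlt
        exact Finsupp.mem_support_iff.mp hp (hV p.1 p.2 (by omega) hbivalent)
      have hscaled : (V p * vertexSize p : ℤ) ≤ V p * (4 * negEulerChar p) :=
        mul_le_mul_of_nonneg_left (vertexSize_le_of_three_le hstable) (V p).cast_nonneg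
      linarith
  calc (weight vertexSize V : ℤ) = ∑ p ∈ V.support, (V p * vertexSize p : ℤ) := by
        simp [weight_apply, Finsupp.sum]
    _ ≤ ∑ p ∈ V.support,
          (4 * (V p * negEulerChar p) + if p = (0, 2) then 3 * (V p : ℤ) else 0) :=
        Finset.sum_le_sum hvertex
    _ = 4 * weight negEulerChar V + 3 * V (0, 2) := by
        simp +contextual [weight_apply, Finsupp.sum, Finset.sum_add_distrib, Finset.mul_sum]

/-- Here `1 + E - ∑ V (h, k)` may be negative: the graphs may be disconnected, and their total genus
`g` may be negative as well. -/
theorem reduced_graph_data_finite_general (g : ℤ) (m n : ℕ) :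
    Set.Finite { VE : ((ℕ × ℕ) →₀ ℕ) × ℕ |
      (∀ h k : ℕ, 2 * h + k ≤ 2 → (h, k) ≠ (0, 2) → VE.1 (h, k) = 0) ∧
      VE.1 (0, 2) ≤ m ∧
      (VE.1.sum fun hk v => hk.2 * v) = 2 * VE.2 + n ∧
      (VE.1.sum fun hk v => (hk.1 : ℤ) * v) +
        (1 + (VE.2 : ℤ) - VE.1.sum fun _ v => (v : ℤ)) = g } := by
  let N : ℕ := (4 * (2 * g - 2 + n) + 3 * m).toNat
  have hfinite : {V | weight vertexSize V ≤ N}.Finite :=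
    finite_setOf_weight_le (fun _ => Nat.succ_ne_zero _) (finite_setOf_vertexSize_le N)
  refine Set.Finite.of_injOn (f := Prod.fst) ?_ ?_ hfinite
  · rintro ⟨V, E⟩ ⟨hstable, hbivalent, hhandshake, hgenus⟩
    have heuler : weight negEulerChar V = 2 * g - 2 + n := by
      rw [weight_negEulerChar, hhandshake]
      push_cast
      linarith
    have hsize : (weight vertexSize V : ℤ) ≤ 4 * (2 * g - 2 + n) + 3 * m :=
      calc (weight vertexSize V : ℤ) ≤ 4 * weight negEulerChar V + 3 * V (0, 2) :=
            weight_vertexSize_le hstable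
        _ ≤ 4 * (2 * g - 2 + n) + 3 * m := by rw [heuler]; gcongr
    exact Int.ofNat_le.mp (hsize.trans (Int.self_le_toNat _))
  · rintro ⟨V, E⟩ ⟨-, -, hE, -⟩ ⟨_, E'⟩ ⟨-, -, hE', -⟩ rfl
    have hedges : 2 * E + n = 2 * E' + n := hE.symm.trans hE'
    exact Prod.ext rfl (by omega)

/-- **Finiteness of reduced graph data.**  For all `g ≥ 0` and `n ≥ 1`, the
set of pairs `(V, E)` — with `V : ℕ × ℕ →₀ ℕ` finitely supported and `E ∈ ℕ` —
satisfying
(i) `V (h, k) = 0` whenever `k = 0`, and whenever `2h - 2 + k ≤ 0` with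
`(h, k) ≠ (0, 2)`;
(ii) `V (0, 2) ≤ n`;
(iii) the handshake relation `∑ k · V (h,k) = 2E + n`;
(iv) `1 + E - ∑ V (h,k) ≥ 0` (the first Betti number of a connected graph is
nonnegative);
(v) the genus constraint `∑ h · V (h,k) + (1 + E - ∑ V (h,k)) = g`
is finite. -/
theorem reduced_graph_data_finite (g n : ℕ) (hn : 1 ≤ n) :
    Set.Finite { VE : ((ℕ × ℕ) →₀ ℕ) × ℕ |
      (∀ h k : ℕ, (k = 0 ∨ (2 * h + k ≤ 2 ∧ (h, k) ≠ (0, 2))) →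
        VE.1 (h, k) = 0) ∧
      VE.1 (0, 2) ≤ n ∧
      (VE.1.sum fun hk v => hk.2 * v) = 2 * VE.2 + n ∧
      (VE.1.sum fun _ v => v) ≤ 1 + VE.2 ∧
      (VE.1.sum fun hk v => (hk.1 : ℤ) * v) +
        (1 + (VE.2 : ℤ) - VE.1.sum fun _ v => (v : ℤ)) = (g : ℤ) } := by
  exact (reduced_graph_data_finite_general g n n).subset
    fun _ ⟨hstable, hbivalent, hhandshake, _, hgenus⟩ =>
      ⟨fun h k hle hne => hstable h k (Or.inr ⟨hle, hne⟩), hbivalent, hhandshake, hgenus⟩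
end
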